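/- Let E be a real inner product space and let e_x : ℝ → E be differentiable on [0,T] with T ≥ 0, and let e_y, e_z : ℝ → F, G be functions into normed spaces. Assume constants K_yz, K_yx, L_y, ε ≥ 0 and μ ∈ ℝ satisfying: (i) for all t ∈ [0,T], ‖e_y(t)‖ ≤ K_yz‖e_z(t)‖ + K_yx‖e_x(t)‖; (ii) for all t ∈ [0,T], ⟪(d/dt)e_x(t), e_x(t)⟫ ≤ μ‖e_x(t)‖² + L_y‖e_y(t)‖·‖e_x(t)‖; (iii) for all t ∈ [0,T], ‖e_z(t)‖ ≤ ε; and (iv) e_x(0) = 0. Then ‖e_x(T)‖ + ‖e_y(T)‖ ≤ [(1 + K_yx)·L_y·K_yz·Φ(T,α) + K_yz]·ε, where α = μ + L_y·K_yx. -/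

import Mathlib

open RealInnerProductSpace

/-- Horizon-dependent amplification factor: `Φ(T,α) = (e^{αT} − 1)/α` for `α ≠ 0`,
and `Φ(T,0) = T`. -/
noncomputable def Phi (T α : ℝ) : ℝ :=
  if α = 0 then T else (Real.exp (α * T) - 1) / α

/-!
At a zero of `e_x` the one-sided Lipschitz condition gives no control on the right derivative of
`‖e_x‖`, so Grönwall's inequality cannot be applied to the norm itself. Instead `‖e_x‖ ^ 2` is
compared with the square of a Grönwall bound with slightly enlarged initial value and forcing: this
bound is positive and strictly steeper wherever the two meet. Letting the enlargement tend to zero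
gives the sharp bound. For the simulator, eliminating `e_y` from the dynamics shifts the growth rate
from `μ` to `μ + L_y * K_yx` and leaves the forcing `L_y * K_yz * ε`.
-/

open Set Filter
open scoped Topology

lemma Phi_nonneg {T : ℝ} (hT : 0 ≤ T) (α : ℝ) : 0 ≤ Phi T α := by
  unfold Phi
  split_ifs
  · exact hT
  · rcases le_total 0 α with hα | hα
    · exact div_nonneg (sub_nonneg.2 (Real.one_le_exp (mul_nonneg hα hT))) hα
    · exact div_nonneg_of_nonpos
        (sub_nonpos.2 (Real.exp_le_one_iff.2 (mul_nonpos_of_nonpos_of_nonneg hα hT))) hα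

lemma gronwallBound_eq_add_mul_Phi (δ K ε x : ℝ) :
    gronwallBound δ K ε x = δ * Real.exp (K * x) + ε * Phi x K := by
  unfold gronwallBound Phi
  split_ifs with hK
  · simp [hK]
  · ring

lemma gronwallBound_pos {δ ε x : ℝ} (hδ : 0 < δ) (K : ℝ) (hε : 0 ≤ ε) (hx : 0 ≤ x) :
    0 < gronwallBound δ K ε x := by
  rw [gronwallBound_eq_add_mul_Phi]
  have := Phi_nonneg hx K
  positivity

section InnerProductSpace

variable {E : Type*} [NormedAddCommGroup E] [InnerProductSpace ℝ E]
  {f f' : ℝ → E} {a b : ℝ}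

theorem image_norm_le_of_inner_deriv_right_lt_deriv_boundary {B B' : ℝ → ℝ}
    (hf : ContinuousOn f (Icc a b)) (hf' : ∀ x ∈ Ico a b, HasDerivWithinAt f (f' x) (Ici x) x)
    (ha : ‖f a‖ ≤ B a) (hB : ∀ x, HasDerivAt B (B' x) x) (hB_nonneg : ∀ x ∈ Icc a b, 0 ≤ B x)
    (bound : ∀ x ∈ Ico a b, ‖f x‖ = B x → ⟪f' x, f x⟫ < B x * B' x) :
    ∀ x ∈ Icc a b, ‖f x‖ ≤ B x := by
  have bound_sq : ∀ x ∈ Ico a b, ‖f x‖ ^ 2 = B x ^ 2 → 2 * ⟪f x, f' x⟫ < 2 * B x * B' x := by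
    intro x hx hsq
    have hnorm : ‖f x‖ = B x :=
      (sq_eq_sq₀ (norm_nonneg _) (hB_nonneg x (Ico_subset_Icc_self hx))).1 hsq
    rw [real_inner_comm]
    linarith [bound x hx hnorm]
  have hB_sq (x : ℝ) : HasDerivAt (fun y => B y ^ 2) (2 * B x * B' x) x := by
    simpa using (hB x).fun_pow 2
  intro x hx
  refine le_of_sq_le_sq ?_ (hB_nonneg x hx)
  exact image_le_of_deriv_right_lt_deriv_boundary (hf.norm.pow 2)
    (fun y hy => (hf' y hy).norm_sq) (pow_le_pow_left₀ (norm_nonneg _) ha 2) hB_sq bound_sq hx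

theorem norm_le_gronwallBound_of_inner_deriv_right_le {δ K ε : ℝ}
    (hf : ContinuousOn f (Icc a b)) (hf' : ∀ x ∈ Ico a b, HasDerivWithinAt f (f' x) (Ici x) x)
    (ha : ‖f a‖ ≤ δ) (hε : 0 ≤ ε)
    (bound : ∀ x ∈ Ico a b, ⟪f' x, f x⟫ ≤ K * ‖f x‖ ^ 2 + ε * ‖f x‖) :
    ∀ x ∈ Icc a b, ‖f x‖ ≤ gronwallBound δ K ε (x - a) := by
  have hδ : 0 ≤ δ := (norm_nonneg _).trans ha
  have perturbed (η : ℝ) (hη : 0 < η) :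
      ∀ x ∈ Icc a b, ‖f x‖ ≤ gronwallBound (δ + η) K (ε + η) (x - a) := by
    have hpos : ∀ x ∈ Icc a b, 0 < gronwallBound (δ + η) K (ε + η) (x - a) := fun x hx =>
      gronwallBound_pos (by positivity) K (by positivity) (sub_nonneg.2 hx.1)
    refine image_norm_le_of_inner_deriv_right_lt_deriv_boundary hf hf' ?_
      (fun x => hasDerivAt_gronwallBound_shift _ _ _ x a) (fun x hx => (hpos x hx).le) ?_
    · rw [sub_self, gronwallBound_x0]
      linarith
    · intro x hx hnorm
      have hnorm_pos : 0 < ‖f x‖ := hnorm ▸ hpos x (Ico_subset_Icc_self hx)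
      rw [← hnorm]
      calc ⟪f' x, f x⟫ ≤ K * ‖f x‖ ^ 2 + ε * ‖f x‖ := bound x hx
        _ < K * ‖f x‖ ^ 2 + (ε + η) * ‖f x‖ := by gcongr; linarith
        _ = ‖f x‖ * (K * ‖f x‖ + (ε + η)) := by ring
  intro x hx
  have hcont : Continuous fun η => gronwallBound (δ + η) K (ε + η) (x - a) := by
    simp only [gronwallBound_eq_add_mul_Phi]
    fun_prop
  have hlim : Tendsto (fun η => gronwallBound (δ + η) K (ε + η) (x - a)) (𝓝[>] 0)
      (𝓝 (gronwallBound δ K ε (x - a))) := by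
    simpa using (hcont.tendsto 0).mono_left nhdsWithin_le_nhds
  exact ge_of_tendsto hlim (eventually_mem_nhdsWithin.mono fun η hη => perturbed η hη x hx)

end InnerProductSpace

theorem finite_horizon_total_bound_general
    {E F G : Type*} [NormedAddCommGroup E] [InnerProductSpace ℝ E] [Norm F] [Norm G]
    {T : ℝ} (hT : 0 ≤ T) {e_x e_x' : ℝ → E} {e_y : ℝ → F} {e_z : ℝ → G}
    (hcont : ContinuousOn e_x (Icc 0 T))
    (hderiv : ∀ t ∈ Ico 0 T, HasDerivWithinAt e_x (e_x' t) (Ici t) t)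
    {K_yz K_yx L_y ε μ : ℝ}
    (hKyz : 0 ≤ K_yz) (hKyx : 0 ≤ K_yx) (hLy : 0 ≤ L_y) (hε : 0 ≤ ε)
    (h_alg : ∀ t ∈ Icc 0 T, ‖e_y t‖ ≤ K_yz * ‖e_z t‖ + K_yx * ‖e_x t‖)
    (h_dyn : ∀ t ∈ Ico 0 T, ⟪e_x' t, e_x t⟫ ≤ μ * ‖e_x t‖ ^ 2 + L_y * ‖e_y t‖ * ‖e_x t‖)
    (h_int : ∀ t ∈ Icc 0 T, ‖e_z t‖ ≤ ε) :
    ‖e_x T‖ + ‖e_y T‖ ≤ (1 + K_yx) * (‖e_x 0‖ * Real.exp ((μ + L_y * K_yx) * T)) +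
      ((1 + K_yx) * L_y * K_yz * Phi T (μ + L_y * K_yx) + K_yz) * ε := by
  have h_elim : ∀ t ∈ Icc 0 T, ‖e_y t‖ ≤ K_yz * ε + K_yx * ‖e_x t‖ := fun t ht =>
    (h_alg t ht).trans (by gcongr; exact h_int t ht)
  have h_closed : ∀ t ∈ Ico 0 T,
      ⟪e_x' t, e_x t⟫ ≤ (μ + L_y * K_yx) * ‖e_x t‖ ^ 2 + L_y * K_yz * ε * ‖e_x t‖ := fun t ht =>
    calc ⟪e_x' t, e_x t⟫ ≤ μ * ‖e_x t‖ ^ 2 + L_y * ‖e_y t‖ * ‖e_x t‖ := h_dyn t ht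
      _ ≤ μ * ‖e_x t‖ ^ 2 + L_y * (K_yz * ε + K_yx * ‖e_x t‖) * ‖e_x t‖ := by
        gcongr
        exact h_elim t (Ico_subset_Icc_self ht)
      _ = (μ + L_y * K_yx) * ‖e_x t‖ ^ 2 + L_y * K_yz * ε * ‖e_x t‖ := by ring
  have h_state := norm_le_gronwallBound_of_inner_deriv_right_le hcont hderiv le_rfl
    (by positivity) h_closed T (right_mem_Icc.2 hT)
  rw [sub_zero, gronwallBound_eq_add_mul_Phi] at h_state
  calc ‖e_x T‖ + ‖e_y T‖ ≤ (1 + K_yx) * ‖e_x T‖ + K_yz * ε := by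
        linarith [h_elim T (right_mem_Icc.2 hT)]
    _ ≤ (1 + K_yx) * (‖e_x 0‖ * Real.exp ((μ + L_y * K_yx) * T) +
          L_y * K_yz * ε * Phi T (μ + L_y * K_yx)) + K_yz * ε := by gcongr
    _ = _ := by ring

/-- Finite-horizon in-simulator acceptance bound: total simulator-level deviation. -/
theorem finite_horizon_total_bound
    {E F G : Type*} [NormedAddCommGroup E] [InnerProductSpace ℝ E]
    [NormedAddCommGroup F] [NormedSpace ℝ F]
    [NormedAddCommGroup G] [NormedSpace ℝ G]
    (T : ℝ) (hT : 0 ≤ T)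
    (e_x : ℝ → E) (e_y : ℝ → F) (e_z : ℝ → G)
    (hdiff : ∀ t ∈ Set.Icc (0 : ℝ) T, DifferentiableAt ℝ e_x t)
    (K_yz K_yx L_y ε μ : ℝ)
    (hKyz : 0 ≤ K_yz) (hKyx : 0 ≤ K_yx) (hLy : 0 ≤ L_y) (hε : 0 ≤ ε)
    (h1 : ∀ t ∈ Set.Icc (0 : ℝ) T, ‖e_y t‖ ≤ K_yz * ‖e_z t‖ + K_yx * ‖e_x t‖)
    (h2 : ∀ t ∈ Set.Icc (0 : ℝ) T,
      ⟪deriv e_x t, e_x t⟫ ≤ μ * ‖e_x t‖ ^ 2 + L_y * ‖e_y t‖ * ‖e_x t‖)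
    (h3 : ∀ t ∈ Set.Icc (0 : ℝ) T, ‖e_z t‖ ≤ ε)
    (h4 : e_x 0 = 0) :
    ‖e_x T‖ + ‖e_y T‖ ≤ ((1 + K_yx) * L_y * K_yz * Phi T (μ + L_y * K_yx) + K_yz) * ε := by
  simpa [h4] using finite_horizon_total_bound_general hT
    (fun t ht => (hdiff t ht).continuousAt.continuousWithinAt)
    (fun t ht => (hdiff t (Ico_subset_Icc_self ht)).hasDerivAt.hasDerivWithinAt)
    hKyz hKyx hLy hε h1 (fun t ht => h2 t (Ico_subset_Icc_self ht)) h3
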